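/- arXiv:2403.14605 — 2 statements merged into one kernel-verified Lean document; each statement's English description precedes it below -/
import Mathlib

section
/- Sufficient condition for the perturbed state chance constraint (condition (S)): let Σ_q be real symmetric positive semidefinite, let C_q and C be N-step control sequences with the same feedforward terms (so the mean sequence μ_k is common), let γ_k be defined by γ_0 = I and γ_{k+1} = (A + B K_k(C)) γ_k (A + B K_k(C))^T, and suppose the state chance constraint holds strictly at step k under (Σ_q, C_q) with slack z_{s,k} := β_x − α_x^T μ_k − c_x √(α_x^T Σ_k(Σ_q, C_q) α_x) > 0. If ε ≥ 0 satisfies c_x √ε √(α_x^T γ_k α_x) ≤ z_{s,k} − c_x [ √(α_x^T Σ_k(Σ_q, C) α_x) − √(α_x^T Σ_k(Σ_q, C_q) α_x) ], then the state chance constraint holds at step k for the covariance initialized at Σ_q + εI under C, i.e. c_x √(α_x^T Σ_k(Σ_q + εI, C) α_x) + α_x^T μ_k ≤ β_x. -/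
open Matrix

/-- Largest eigenvalue of a real symmetric matrix (junk value `0` if not symmetric). -/
noncomputable def lamMax {n : ℕ} (M : Matrix (Fin n) (Fin n) ℝ) : ℝ :=
  if h : M.IsHermitian then ⨆ i, h.eigenvalues i else 0

/-- Smallest eigenvalue of a real symmetric matrix (junk value `0` if not symmetric). -/
noncomputable def lamMin {n : ℕ} (M : Matrix (Fin n) (Fin n) ℝ) : ℝ :=
  if h : M.IsHermitian then ⨅ i, h.eigenvalues i else 0

/-- Covariance dynamics `Σ_{k+1} = (A + B K_k) Σ_k (A + B K_k)ᵀ + D Dᵀ`. -/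
def covSeq {n m : ℕ} (A : Matrix (Fin n) (Fin n) ℝ) (B : Matrix (Fin n) (Fin m) ℝ)
    (D : Matrix (Fin n) (Fin n) ℝ) (K : ℕ → Matrix (Fin m) (Fin n) ℝ)
    (S0 : Matrix (Fin n) (Fin n) ℝ) : ℕ → Matrix (Fin n) (Fin n) ℝ
  | 0 => S0
  | k + 1 => (A + B * K k) * covSeq A B D K S0 k * (A + B * K k)ᵀ + D * Dᵀ

/-- Mean dynamics `μ_{k+1} = A μ_k + B v_k`. -/
def meanSeq {n m : ℕ} (A : Matrix (Fin n) (Fin n) ℝ) (B : Matrix (Fin n) (Fin m) ℝ)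
    (v : ℕ → Fin m → ℝ) (mu0 : Fin n → ℝ) : ℕ → Fin n → ℝ
  | 0 => mu0
  | k + 1 => A.mulVec (meanSeq A B v mu0 k) + B.mulVec (v k)

/-- Perturbation propagators `γ_0 = I`, `γ_{k+1} = (A + B K_k) γ_k (A + B K_k)ᵀ`. -/
def gammaSeq {n m : ℕ} (A : Matrix (Fin n) (Fin n) ℝ) (B : Matrix (Fin n) (Fin m) ℝ)
    (K : ℕ → Matrix (Fin m) (Fin n) ℝ) : ℕ → Matrix (Fin n) (Fin n) ℝ
  | 0 => 1
  | k + 1 => (A + B * K k) * gammaSeq A B K k * (A + B * K k)ᵀ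

/-- A planning scene: state/control constraint data `α_x, β_x, c_x, α_u, β_u, c_u`
with `c_x, c_u ≥ 0`. -/
structure Scene (n m : ℕ) where
  ax : Fin n → ℝ
  au : Fin m → ℝ
  bx : ℝ
  bu : ℝ
  cx : ℝ
  cu : ℝ
  cx_nonneg : 0 ≤ cx
  cu_nonneg : 0 ≤ cu

/-- `Steers A B D sc N K v μp Sp μq Sq` means `(μp, Sp) →_N^{(K, v)} (μq, Sq)`:
the mean and covariance trajectories initialized at `(μp, Sp)` and driven by the
control sequence `(K, v)` satisfy the state and control chance constraints for
`k = 0, …, N-1`, the terminal mean constraint `μ_N = μq`, and the terminal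
covariance constraint `λ_max(Σ_N) ≤ λ_min(Σ_q)`. -/
def Steers {n m : ℕ} (A : Matrix (Fin n) (Fin n) ℝ) (B : Matrix (Fin n) (Fin m) ℝ)
    (D : Matrix (Fin n) (Fin n) ℝ) (sc : Scene n m) (N : ℕ)
    (K : ℕ → Matrix (Fin m) (Fin n) ℝ) (v : ℕ → Fin m → ℝ)
    (μp : Fin n → ℝ) (Sp : Matrix (Fin n) (Fin n) ℝ)
    (μq : Fin n → ℝ) (Sq : Matrix (Fin n) (Fin n) ℝ) : Prop :=
  (∀ k < N, sc.cx * Real.sqrt (sc.ax ⬝ᵥ (covSeq A B D K Sp k).mulVec sc.ax)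
      + sc.ax ⬝ᵥ meanSeq A B v μp k ≤ sc.bx) ∧
  (∀ k < N, sc.cu * Real.sqrt (sc.au ⬝ᵥ (K k * covSeq A B D K Sp k * (K k)ᵀ).mulVec sc.au)
      + sc.au ⬝ᵥ v k ≤ sc.bu) ∧
  meanSeq A B v μp N = μq ∧
  lamMax (covSeq A B D K Sp N) ≤ lamMin Sq

/-- Concatenation of two (time-indexed) sequences: the first for steps `0,…,N-1`,
then the second, shifted by `N`. -/
def concatSeq {α : Type*} (N : ℕ) (f g : ℕ → α) : ℕ → α :=
  fun k => if k < N then f k else g (k - N)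

/-- Concatenation of `d` sequences with lengths `Ns i`, applied consecutively. -/
def multiConcat {α : Type*} [Zero α] : (d : ℕ) → (Fin d → ℕ) → (Fin d → ℕ → α) → ℕ → α
  | 0, _, _ => fun _ => 0
  | d + 1, Ns, fs =>
      concatSeq (Ns 0) (fs 0) (multiConcat d (fun i => Ns i.succ) (fun i => fs i.succ))

/-- `h`-hop backward reachable set of the distribution `(μ, S)`: all pairs
`(μ_q, Σ_q)` with `Σ_q` positive semidefinite from which some `h*N`-step control
sequence steers to `(μ, S)`. -/
def BRS {n m : ℕ} (A : Matrix (Fin n) (Fin n) ℝ) (B : Matrix (Fin n) (Fin m) ℝ)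
    (D : Matrix (Fin n) (Fin n) ℝ) (sc : Scene n m) (h N : ℕ)
    (μ : Fin n → ℝ) (S : Matrix (Fin n) (Fin n) ℝ) :
    Set ((Fin n → ℝ) × Matrix (Fin n) (Fin n) ℝ) :=
  { p | p.2.PosSemidef ∧
      ∃ (K : ℕ → Matrix (Fin m) (Fin n) ℝ) (v : ℕ → Fin m → ℝ),
        Steers A B D sc (h * N) K v p.1 p.2 μ S }

/-! The covariance recursion is affine in the initial covariance, so a perturbation of the latter
contributes an additive term that follows the same recursion without noise; for `ε I` this term is
`ε γ_k`. The square root is subadditive, so in the direction `α_x` the standard deviation grows by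
at most `√ε √(α_xᵀ γ_k α_x)`. Once the terms of `C_q` cancel, the condition on `ε` says that this
growth fits into the remaining margin. -/

lemma sqrt_dotProduct_add_mulVec_le {ι : Type*} [Fintype ι] {M N : Matrix ι ι ℝ}
    (hM : M.PosSemidef) (hN : N.PosSemidef) (x : ι → ℝ) :
    √(x ⬝ᵥ (M + N) *ᵥ x) ≤ √(x ⬝ᵥ M *ᵥ x) + √(x ⬝ᵥ N *ᵥ x) := by
  rw [add_mulVec, dotProduct_add]
  simp only [Real.sqrt_eq_rpow]
  exact Real.rpow_add_le_add_rpow (hM.dotProduct_mulVec_nonneg x) (hN.dotProduct_mulVec_nonneg x)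
    (by norm_num) (by norm_num)

lemma sqrt_dotProduct_smul_mulVec {ι : Type*} [Fintype ι] {c : ℝ} (hc : 0 ≤ c)
    (M : Matrix ι ι ℝ) (x : ι → ℝ) :
    √(x ⬝ᵥ (c • M) *ᵥ x) = √c * √(x ⬝ᵥ M *ᵥ x) := by
  rw [smul_mulVec, dotProduct_smul, smul_eq_mul, Real.sqrt_mul hc]

section Covariance

variable {n m : ℕ} (A : Matrix (Fin n) (Fin n) ℝ) (B : Matrix (Fin n) (Fin m) ℝ)
  (D : Matrix (Fin n) (Fin n) ℝ) (K : ℕ → Matrix (Fin m) (Fin n) ℝ)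

lemma posSemidef_covSeq {S : Matrix (Fin n) (Fin n) ℝ} (hS : S.PosSemidef) (k : ℕ) :
    (covSeq A B D K S k).PosSemidef := by
  induction k with
  | zero => exact hS
  | succ k ih =>
    exact (ih.mul_mul_conjTranspose_same (A + B * K k)).add (posSemidef_self_mul_conjTranspose D)

lemma covSeq_add (S P : Matrix (Fin n) (Fin n) ℝ) (k : ℕ) :
    covSeq A B D K (S + P) k = covSeq A B D K S k + covSeq A B 0 K P k := by
  induction k with
  | zero => rfl
  | succ k ih =>
    simp only [covSeq, ih, mul_add, add_mul _ _ (A + B * K k)ᵀ, zero_mul, add_zero]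
    exact add_right_comm _ _ _

lemma covSeq_noiseless_smul (c : ℝ) (P : Matrix (Fin n) (Fin n) ℝ) (k : ℕ) :
    covSeq A B 0 K (c • P) k = c • covSeq A B 0 K P k := by
  induction k with
  | zero => rfl
  | succ k ih => simp only [covSeq, ih, mul_smul_comm, smul_mul_assoc, zero_mul, add_zero]

lemma covSeq_noiseless_one (k : ℕ) : covSeq A B 0 K 1 k = gammaSeq A B K k := by
  induction k with
  | zero => rfl
  | succ k ih => simp only [covSeq, gammaSeq, ih, zero_mul, add_zero]

theorem perturbed_state_chance_constraint_general (ax : Fin n → ℝ) (bx : ℝ) {cx : ℝ}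
    (hcx : 0 ≤ cx) {S P : Matrix (Fin n) (Fin n) ℝ} (hS : S.PosSemidef) (hP : P.PosSemidef)
    (v : ℕ → Fin m → ℝ) (μ0 : Fin n → ℝ) (k : ℕ)
    (hcond : cx * √(ax ⬝ᵥ covSeq A B 0 K P k *ᵥ ax)
      ≤ bx - ax ⬝ᵥ meanSeq A B v μ0 k - cx * √(ax ⬝ᵥ covSeq A B D K S k *ᵥ ax)) :
    cx * √(ax ⬝ᵥ covSeq A B D K (S + P) k *ᵥ ax) + ax ⬝ᵥ meanSeq A B v μ0 k ≤ bx := by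
  have hstd : √(ax ⬝ᵥ covSeq A B D K (S + P) k *ᵥ ax)
      ≤ √(ax ⬝ᵥ covSeq A B D K S k *ᵥ ax) + √(ax ⬝ᵥ covSeq A B 0 K P k *ᵥ ax) := by
    rw [covSeq_add]
    exact sqrt_dotProduct_add_mulVec_le (posSemidef_covSeq A B D K hS k)
      (posSemidef_covSeq A B 0 K hP k) ax
  linarith [mul_le_mul_of_nonneg_left hstd hcx]

end Covariance

/-- condition (S): sufficient condition for the perturbed state
chance constraint. `Kq` and `K` are the gains of `C_q` and `C`, which share the
feedforward terms `v` (hence the common mean sequence). -/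
theorem perturbed_state_chance_constraint {n m : ℕ}
    (A : Matrix (Fin n) (Fin n) ℝ) (B : Matrix (Fin n) (Fin m) ℝ)
    (D : Matrix (Fin n) (Fin n) ℝ)
    (ax : Fin n → ℝ) (bx cx : ℝ) (hcx : 0 ≤ cx)
    (Sq : Matrix (Fin n) (Fin n) ℝ) (hSq : Sq.PosSemidef)
    (N : ℕ) (Kq K : ℕ → Matrix (Fin m) (Fin n) ℝ) (v : ℕ → Fin m → ℝ)
    (μ0 : Fin n → ℝ) (k : ℕ) (hk : k < N)
    (hslack : 0 < bx - ax ⬝ᵥ meanSeq A B v μ0 k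
        - cx * Real.sqrt (ax ⬝ᵥ (covSeq A B D Kq Sq k).mulVec ax))
    (ε : ℝ) (hε : 0 ≤ ε)
    (hcond : cx * Real.sqrt ε * Real.sqrt (ax ⬝ᵥ (gammaSeq A B K k).mulVec ax)
        ≤ (bx - ax ⬝ᵥ meanSeq A B v μ0 k
            - cx * Real.sqrt (ax ⬝ᵥ (covSeq A B D Kq Sq k).mulVec ax))
          - cx * (Real.sqrt (ax ⬝ᵥ (covSeq A B D K Sq k).mulVec ax)
            - Real.sqrt (ax ⬝ᵥ (covSeq A B D Kq Sq k).mulVec ax))) :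
    cx * Real.sqrt (ax ⬝ᵥ (covSeq A B D K
        (Sq + ε • (1 : Matrix (Fin n) (Fin n) ℝ)) k).mulVec ax)
      + ax ⬝ᵥ meanSeq A B v μ0 k ≤ bx := by
  refine perturbed_state_chance_constraint_general A B D K ax bx hcx hSq (.smul .one hε) v μ0 k ?_
  rw [covSeq_noiseless_smul, covSeq_noiseless_one, sqrt_dotProduct_smul_mulVec hε]
  linarith
end

section
/- Multi-step Loewner dominance under gain scaling (equations (34)–(35)): let Σ_q be real symmetric positive semidefinite, let C_q be an N-step control sequence with gains K_k, and let C(λ) be the control sequence with the same feedforward terms and scaled gains K_k(C(λ)) = (1 − λ_k) K_k for scalars λ_k ≥ 0. Suppose for each k = 0, …, N−1, with S_k = (B K_k) Σ_k(Σ_q, C_q) (B K_k)^T and M_k = (B K_k) Σ_k(Σ_q, C_q) (A + B K_k)^T + (A + B K_k) Σ_k(Σ_q, C_q) (B K_k)^T, the scalar λ_k satisfies λ_k λ_max(S_k) ≤ λ_min(M_k). Then Σ_k(Σ_q, C(λ)) ⪯ Σ_k(Σ_q, C_q) for every k = 0, 1, …, N. -/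
open Matrix

/-!
Write `G = B K_k` and `F = A + G` for the original closed loop, so that scaling the gain by `1 - l`
replaces `F` by `F - l G`. For every `S`,

  `(F - l G) S (F - l G)ᵀ = F S Fᵀ - l (G S Fᵀ + F S Gᵀ - l G S Gᵀ)`,

so scaling shrinks the propagated covariance as soon as `l G S Gᵀ ⪯ G S Fᵀ + F S Gᵀ`, and the
eigenvalue condition guarantees this by placing a multiple of the identity between the two sides.
Conjugation by `F - l G` is monotone, so the comparison survives the induction over the steps.
-/

section StarOrderedRing

variable {𝕜 R : Type*} [CommRing 𝕜] [PartialOrder 𝕜] [StarRing 𝕜] [TrivialStar 𝕜]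
  [Ring R] [StarRing R] [PartialOrder R] [StarOrderedRing R]
  [Algebra 𝕜 R] [StarModule 𝕜 R] [PosSMulMono 𝕜 R]

theorem sub_smul_mul_mul_star_le {f g s t : R} {l : 𝕜} (hl : 0 ≤ l) (hts : t ≤ s)
    (h : l • (g * s * star g) ≤ g * s * star f + f * s * star g) :
    (f - l • g) * t * star (f - l • g) ≤ f * s * star f := by
  have expand : (f - l • g) * s * star (f - l • g) = f * s * star f -
      l • (g * s * star f + f * s * star g - l • (g * s * star g)) := by
    simp only [star_sub, star_smul, star_trivial, sub_mul, mul_sub, smul_mul_assoc,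
      mul_smul_comm]
    module
  calc (f - l • g) * t * star (f - l • g)
      ≤ (f - l • g) * s * star (f - l • g) := star_right_conjugate_le_conjugate hts _
    _ = f * s * star f - l • (g * s * star f + f * s * star g - l • (g * s * star g)) := expand
    _ ≤ f * s * star f := sub_le_self _ (smul_nonneg hl (sub_nonneg.mpr h))

end StarOrderedRing

theorem isHermitian_mul_mul_conjTranspose_add {α p q : Type*} [Fintype p] [NonUnitalSemiring α]
    [StarRing α] {S : Matrix p p α} (hS : S.IsHermitian) (F G : Matrix q p α) :
    (G * S * Fᴴ + F * S * Gᴴ).IsHermitian := by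
  have cross_conjTranspose : (G * S * Fᴴ)ᴴ = F * S * Gᴴ := by
    rw [conjTranspose_mul, conjTranspose_mul, conjTranspose_conjTranspose, hS.eq,
      Matrix.mul_assoc]
  rw [← cross_conjTranspose]
  exact isHermitian_add_transpose_self _

section Loewner

open scoped MatrixOrder

section Eigenvalue

variable {n : ℕ} {M S : Matrix (Fin n) (Fin n) ℝ}

theorem algebraMap_lamMin_le (hM : M.IsHermitian) : algebraMap ℝ _ (lamMin M) ≤ M := by
  rw [algebraMap_le_iff_le_spectrum hM.isSelfAdjoint, hM.spectrum_real_eq_range_eigenvalues,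
    Set.forall_mem_range, lamMin, dif_pos hM]
  exact ciInf_le (Set.finite_range _).bddBelow

theorem le_algebraMap_lamMax (hM : M.IsHermitian) : M ≤ algebraMap ℝ _ (lamMax M) := by
  rw [le_algebraMap_iff_spectrum_le hM.isSelfAdjoint, hM.spectrum_real_eq_range_eigenvalues,
    Set.forall_mem_range, lamMax, dif_pos hM]
  exact le_ciSup (Set.finite_range _).bddAbove

theorem smul_le_of_mul_lamMax_le_lamMin (hS : S.IsHermitian) (hM : M.IsHermitian) {l : ℝ}
    (hl : 0 ≤ l) (h : l * lamMax S ≤ lamMin M) : l • S ≤ M :=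
  calc l • S ≤ l • algebraMap ℝ _ (lamMax S) :=
        smul_le_smul_of_nonneg_left (le_algebraMap_lamMax hS) hl
    _ = algebraMap ℝ _ (l * lamMax S) := by rw [map_mul, Algebra.smul_def]
    _ ≤ algebraMap ℝ _ (lamMin M) := algebraMap_mono _ h
    _ ≤ M := algebraMap_lamMin_le hM

end Eigenvalue

section Covariance

variable {n m : ℕ} {A : Matrix (Fin n) (Fin n) ℝ} {B : Matrix (Fin n) (Fin m) ℝ}
  {D : Matrix (Fin n) (Fin n) ℝ} {K : ℕ → Matrix (Fin m) (Fin n) ℝ}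
  {S₀ T₀ : Matrix (Fin n) (Fin n) ℝ}

theorem covSeq_isHermitian (hS₀ : S₀.IsHermitian) (k : ℕ) :
    (covSeq A B D K S₀ k).IsHermitian := by
  induction k with
  | zero => exact hS₀
  | succ k ih =>
    exact (isHermitian_mul_mul_conjTranspose _ ih).add (isHermitian_mul_conjTranspose_self D)

theorem covSeq_one_sub_smul_le {N : ℕ} {lam : ℕ → ℝ} (h₀ : T₀ ≤ S₀)
    (hlam : ∀ k < N, 0 ≤ lam k)
    (hcond : ∀ k < N, lam k • ((B * K k) * covSeq A B D K S₀ k * (B * K k)ᵀ)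
      ≤ (B * K k) * covSeq A B D K S₀ k * (A + B * K k)ᵀ
        + (A + B * K k) * covSeq A B D K S₀ k * (B * K k)ᵀ) :
    ∀ k ≤ N, covSeq A B D (fun k => (1 - lam k) • K k) T₀ k ≤ covSeq A B D K S₀ k := by
  intro k hk
  induction k with
  | zero => exact h₀
  | succ k ih =>
    have closedLoop : A + B * ((1 - lam k) • K k) = (A + B * K k) - lam k • (B * K k) := by
      rw [Matrix.mul_smul]
      module
    simp only [covSeq, closedLoop]
    gcongr
    exact sub_smul_mul_mul_star_le (hlam k hk) (ih (Nat.le_of_succ_le hk)) (hcond k hk)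

theorem multi_step_loewner_dominance_general {N : ℕ} {lam : ℕ → ℝ} (hS₀ : S₀.IsHermitian)
    (h₀ : (S₀ - T₀).PosSemidef) (hlam : ∀ k < N, 0 ≤ lam k)
    (hcond : ∀ k < N,
      lam k * lamMax ((B * K k) * covSeq A B D K S₀ k * (B * K k)ᵀ)
        ≤ lamMin ((B * K k) * covSeq A B D K S₀ k * (A + B * K k)ᵀ
            + (A + B * K k) * covSeq A B D K S₀ k * (B * K k)ᵀ)) :
    ∀ k ≤ N, (covSeq A B D K S₀ k
        - covSeq A B D (fun k => (1 - lam k) • K k) T₀ k).PosSemidef := by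
  refine covSeq_one_sub_smul_le h₀ hlam fun k hk => ?_
  have hS : (covSeq A B D K S₀ k).IsHermitian := covSeq_isHermitian hS₀ k
  exact smul_le_of_mul_lamMax_le_lamMin (isHermitian_mul_mul_conjTranspose _ hS)
    (isHermitian_mul_mul_conjTranspose_add hS _ _) (hlam k hk) (hcond k hk)

end Covariance

end Loewner

/-- equations (34)–(35): multi-step Loewner dominance under gain
scaling `K_k(C(λ)) = (1 - λ_k) K_k`. -/
theorem multi_step_loewner_dominance {n m : ℕ}
    (A : Matrix (Fin n) (Fin n) ℝ) (B : Matrix (Fin n) (Fin m) ℝ)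
    (D : Matrix (Fin n) (Fin n) ℝ)
    (Sq : Matrix (Fin n) (Fin n) ℝ) (hSq : Sq.PosSemidef)
    (N : ℕ) (K : ℕ → Matrix (Fin m) (Fin n) ℝ) (lam : ℕ → ℝ)
    (hlam : ∀ k < N, 0 ≤ lam k)
    (hcond : ∀ k < N,
      lam k * lamMax ((B * K k) * covSeq A B D K Sq k * (B * K k)ᵀ)
        ≤ lamMin ((B * K k) * covSeq A B D K Sq k * (A + B * K k)ᵀ
            + (A + B * K k) * covSeq A B D K Sq k * (B * K k)ᵀ)) :
    ∀ k ≤ N, (covSeq A B D K Sq k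
        - covSeq A B D (fun k => (1 - lam k) • K k) Sq k).PosSemidef :=
  multi_step_loewner_dominance_general hSq.isHermitian ((sub_self Sq).symm ▸ PosSemidef.zero)
    hlam hcond
end
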